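/- Let λ be an even partition of length r. For every fixed integer k, the real zeros of the exceptional Hermite polynomials of odd degree satisfy the scaling limit lim_{n→∞} 2√n · x_{k+n+1−|λ|/2, 2n+1} = kπ, where x_{1,m} < x_{2,m} < ⋯ < x_{m−|λ|,m} denote the real zeros of P_m arranged in increasing order (for m ≥ |λ|+λ_1 there are exactly m−|λ| of them). -/

import Mathlib

open Polynomial

/-- The physicists' Hermite polynomials: `H 0 = 1`, `H (n+1) = 2X * H n - (H n)'`. -/
noncomputable def physHermite : ℕ → Polynomial ℝ
  | 0 => 1
  | n + 1 => 2 * X * physHermite n - derivative (physHermite n)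

/-- Wronskian determinant of a finite family of polynomials. -/
noncomputable def Wron {m : ℕ} (f : Fin m → Polynomial ℝ) : Polynomial ℝ :=
  Matrix.det (Matrix.of fun i j : Fin m => (fun p => derivative p)^[(i : ℕ)] (f j))

/-- `lam : Fin r → ℕ` is a partition: weakly decreasing with positive parts. -/
def IsPartition (r : ℕ) (lam : Fin r → ℕ) : Prop :=
  (∀ i j : Fin r, i ≤ j → lam j ≤ lam i) ∧ ∀ i, 1 ≤ lam i

/-- An even (double) partition: `r` even and `λ_{2k-1} = λ_{2k}`. -/
def IsEvenPartition (r : ℕ) (lam : Fin r → ℕ) : Prop :=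
  IsPartition r lam ∧ Even r ∧
    ∀ k : ℕ, ∀ h : 2 * k + 1 < r, lam ⟨2 * k, by omega⟩ = lam ⟨2 * k + 1, h⟩

/-- The generalized Hermite polynomial `H_λ = Wr[H_{λ_r}, H_{λ_{r-1}+1}, …, H_{λ_1+r-1}]`. -/
noncomputable def genHermite (r : ℕ) (lam : Fin r → ℕ) : Polynomial ℝ :=
  Wron fun j : Fin r => physHermite (lam (Fin.rev j) + j)

/-- The exceptional Hermite polynomial
`P_n = Wr[H_{λ_r}, H_{λ_{r-1}+1}, …, H_{λ_1+r-1}, H_{n-|λ|+r}]`. -/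
noncomputable def XHermite (r : ℕ) (lam : Fin r → ℕ) (n : ℕ) : Polynomial ℝ :=
  Wron fun j : Fin (r + 1) =>
    if h : (j : ℕ) < r then physHermite (lam (Fin.rev ⟨(j : ℕ), h⟩) + j)
    else physHermite (n + r - ∑ i, lam i)

/-- The degree sequence `N_λ`: `n ≥ |λ| - r` and `n ≠ |λ| + λ_j - j` for `j = 1, …, r`. -/
def XDegSeq (r : ℕ) (lam : Fin r → ℕ) (n : ℕ) : Prop :=
  (∑ i, lam i) ≤ n + r ∧ ∀ i : Fin r, n ≠ (∑ i, lam i) + lam i - ((i : ℕ) + 1)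

/-!
Expanding the Wronskian along its last column gives `P_n = ∑ cᵢ H⁽ⁱ⁾` with `H = H_{n-|λ|+r}` and
polynomial cofactors `cᵢ` not depending on `n`, the top one being `H_λ`. Near the origin and on the
scale `1/√n`, the Hermite equation becomes `u'' = -u` up to a perturbation of size `1/n`, so in odd
degree `n - |λ|` the derivative `H⁽ʳ⁾`, a multiple of `H_{n-|λ|}`, tends to a sine. It dominates the
sum because each differentiation gains a factor `√n`. So the rescaled `P_n` tends to `H_λ(0) sin`,
locally uniformly together with its derivative; by Hurwitz and Rolle its consecutive zeros tend to
consecutive multiples of `π`, and the symmetry of `P_n` puts the central zero at `0`.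

It remains that `H_λ(0) ≠ 0`. If not, some nontrivial combination of the Hermite polynomials
entering `H_λ` is divisible by `X ^ r`. For even `λ` half of their `r` degrees are even and half are
odd, so applying a polynomial of degree below `r / 2` in the operator `p ↦ 2xp' - p''` isolates a
single Hermite polynomial while leaving a factor `X ^ 2`, which no Hermite polynomial has.
-/

section Hermite

lemma physHermite_succ (n : ℕ) :
    physHermite (n + 1) = 2 * X * physHermite n - derivative (physHermite n) := rfl

lemma derivative_physHermite_succ (n : ℕ) :
    derivative (physHermite (n + 1)) = C (2 * (n + 1 : ℝ)) * physHermite n := by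
  induction n with
  | zero => simp [physHermite, C_ofNat]
  | succ n ih =>
    rw [physHermite_succ (n + 1), derivative_sub, ih, derivative_C_mul, derivative_mul, ih]
    simp only [derivative_mul, derivative_ofNat, derivative_X, physHermite_succ n]
    simp only [map_mul, map_add, C_ofNat, map_natCast, map_one]
    push_cast
    ring

lemma iterate_derivative_physHermite_add (n i : ℕ) :
    derivative^[i] (physHermite (n + i))
      = C (2 ^ i * ((n + i).descFactorial i : ℝ)) * physHermite n := by
  induction i with
  | zero => simp
  | succ i ih =>
    rw [Function.iterate_succ_apply, ← add_assoc, derivative_physHermite_succ,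
      iterate_derivative_C_mul, ih, ← mul_assoc, ← C_mul, Nat.succ_descFactorial_succ]
    push_cast
    ring_nf

lemma physHermite_ode (n : ℕ) :
    derivative^[2] (physHermite n)
      = 2 * X * derivative (physHermite n) - C (2 * (n : ℝ)) * physHermite n := by
  have h := derivative_physHermite_succ n
  simp only [physHermite_succ, derivative_sub, derivative_mul, derivative_ofNat, derivative_X,
    map_mul, map_add, C_ofNat, map_natCast, map_one] at h
  simp only [Function.iterate_succ_apply, Function.iterate_zero_apply, map_mul, C_ofNat,
    map_natCast]
  linear_combination -h

lemma iterate_derivative_physHermite_ode (n i : ℕ) :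
    derivative^[i + 2] (physHermite (n + i))
      = 2 * X * derivative^[i + 1] (physHermite (n + i))
        - C (2 * (n : ℝ)) * derivative^[i] (physHermite (n + i)) := by
  rw [add_comm i, add_comm i, Function.iterate_add_apply, Function.iterate_add_apply _ 1,
    Function.iterate_one, iterate_derivative_physHermite_add, iterate_derivative_C_mul,
    derivative_C_mul, physHermite_ode]
  ring

lemma physHermite_comp_neg_X (n : ℕ) :
    (physHermite n).comp (C (-1) * X) = C ((-1) ^ n) * physHermite n := by
  induction n with
  | zero => simp [physHermite]
  | succ n ih =>
    have h := congrArg derivative ih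
    simp only [derivative_comp, derivative_C_mul, derivative_X] at h
    simp only [physHermite_succ, sub_comp, mul_comp, X_comp, ofNat_comp, ih]
    simp only [map_neg, map_one, map_pow] at h ⊢
    linear_combination h

lemma coeff_zero_physHermite_ne_zero_iff (n : ℕ) : (physHermite n).coeff 0 ≠ 0 ↔ Even n := by
  induction n using Nat.twoStepInduction with
  | zero => simp [physHermite]
  | one => simp [physHermite]
  | more n ih _ =>
    have h : (physHermite (n + 2)).coeff 0 = -(2 * (n + 1)) * (physHermite n).coeff 0 := by
      rw [physHermite_succ, derivative_physHermite_succ, mul_assoc]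
      simp
    rw [h, Nat.even_add, iff_true_right even_two, ← ih, mul_ne_zero_iff]
    exact and_iff_right (neg_ne_zero.mpr (by positivity))

lemma coeff_one_physHermite_ne_zero_iff (n : ℕ) : (physHermite n).coeff 1 ≠ 0 ↔ Odd n := by
  cases n with
  | zero => simp [physHermite, coeff_one]
  | succ n =>
    have h : (physHermite (n + 1)).coeff 1 = 2 * (n + 1) * (physHermite n).coeff 0 := by
      simpa [derivative_physHermite_succ] using (coeff_derivative (physHermite (n + 1)) 0).symm
    rw [h, mul_ne_zero_iff, and_iff_right (by positivity), coeff_zero_physHermite_ne_zero_iff,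
      Nat.odd_add_one, Nat.not_odd_iff_even]

lemma coeff_mod_two_physHermite_ne_zero_iff (m n : ℕ) :
    (physHermite m).coeff (n % 2) ≠ 0 ↔ m % 2 = n % 2 := by
  rcases Nat.mod_two_eq_zero_or_one n with h | h <;> rw [h]
  · rw [coeff_zero_physHermite_ne_zero_iff, Nat.even_iff]
  · rw [coeff_one_physHermite_ne_zero_iff, Nat.odd_iff]

lemma physHermite_ne_zero (n : ℕ) : physHermite n ≠ 0 := by
  intro h
  simpa [h] using coeff_mod_two_physHermite_ne_zero_iff n n

end Hermite

section Wronskian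

variable {m : ℕ}

lemma eval_Wron (f : Fin m → ℝ[X]) (t : ℝ) :
    (Wron f).eval t = (Matrix.of fun i j : Fin m => (derivative^[i] (f j)).eval t).det := by
  rw [Wron, ← coe_evalRingHom, RingHom.map_det]
  rfl

lemma Wron_C_mul (b : Fin m → ℝ) (f : Fin m → ℝ[X]) :
    Wron (fun j => C (b j) * f j) = C (∏ j, b j) * Wron f := by
  rw [Wron, Wron, map_prod, ← Matrix.det_mul_row]
  simp only [iterate_derivative_C_mul, Matrix.of_apply]

lemma iterate_derivative_comp_C_mul_X (p : ℝ[X]) (a : ℝ) (i : ℕ) :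
    derivative^[i] (p.comp (C a * X)) = C (a ^ i) * (derivative^[i] p).comp (C a * X) := by
  induction i with
  | zero => simp
  | succ i ih =>
    rw [Function.iterate_succ_apply', ih, Function.iterate_succ_apply', derivative_C_mul,
      derivative_comp, derivative_C_mul_X, ← mul_assoc, ← C_mul, pow_succ]

lemma eval_Wron_comp_C_mul_X (f : Fin m → ℝ[X]) (a t : ℝ) :
    (Wron fun j => (f j).comp (C a * X)).eval t =
      (∏ i : Fin m, a ^ (i : ℕ)) * (Wron f).eval (a * t) := by
  rw [eval_Wron, eval_Wron, ← Matrix.det_mul_column]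
  simp [iterate_derivative_comp_C_mul_X]

lemma eval_neg_Wron_eq_zero_iff (f : Fin m → ℝ[X]) (n : Fin m → ℕ)
    (hf : ∀ j, (f j).comp (C (-1) * X) = C ((-1) ^ n j) * f j) (t : ℝ) :
    (Wron f).eval (-t) = 0 ↔ (Wron f).eval t = 0 := by
  have h := eval_Wron_comp_C_mul_X f (-1) t
  simp only [hf, Wron_C_mul, eval_mul, eval_C, neg_one_mul] at h
  have hprod : (∏ i : Fin m, (-1 : ℝ) ^ (i : ℕ)) ≠ 0 := by simp [Finset.prod_eq_zero_iff]
  rw [← mul_eq_zero_iff_left hprod, ← h]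
  simp [Finset.prod_eq_zero_iff]

lemma exists_Wron_snoc_eq_sum (f : Fin m → ℝ[X]) :
    ∃ c : Fin (m + 1) → ℝ[X], c (Fin.last m) = Wron f ∧
      ∀ p, Wron (Fin.snoc f p : Fin (m + 1) → ℝ[X]) = ∑ i, c i * derivative^[i] p := by
  let A : Matrix (Fin (m + 1)) (Fin m) ℝ[X] := Matrix.of fun i j => derivative^[i] (f j)
  refine ⟨fun i => (-1) ^ ((i : ℕ) + m) * (A.submatrix i.succAbove id).det, ?_, fun p => ?_⟩
  · simp only [Fin.val_last, Fin.succAbove_last, Even.neg_one_pow ⟨m, rfl⟩, one_mul]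
    rfl
  · rw [Wron, Matrix.det_succ_column _ (Fin.last m)]
    refine Finset.sum_congr rfl fun i _ => ?_
    have hminor : (Matrix.of fun i j : Fin (m + 1) => derivative^[i]
          ((Fin.snoc f p : Fin (m + 1) → ℝ[X]) j)).submatrix i.succAbove (Fin.last m).succAbove
        = A.submatrix i.succAbove id := by
      ext1 a b
      simp [A]
    simp only [hminor, Matrix.of_apply, Fin.snoc_last, Fin.val_last]
    ring

lemma eval_zero_Wron_ne_zero (f : Fin m → ℝ[X])
    (hf : ∀ w : Fin m → ℝ, (X : ℝ[X]) ^ m ∣ ∑ j, w j • f j → w = 0) :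
    (Wron f).eval 0 ≠ 0 := by
  rw [eval_Wron]
  intro hdet
  obtain ⟨w, hw, hker⟩ := Matrix.exists_mulVec_eq_zero_iff.mpr hdet
  refine hw (hf w (X_pow_dvd_iff.mpr fun d hd => ?_))
  have heval : (derivative^[d] (∑ j, w j • f j)).eval 0 = 0 := by
    have h := congrFun hker ⟨d, hd⟩
    simp only [Matrix.mulVec, dotProduct, Matrix.of_apply, Pi.zero_apply] at h
    simpa only [iterate_derivative_sum, iterate_derivative_smul, eval_finsetSum, eval_smul,
      smul_eq_mul, mul_comm] using h
  rw [← coeff_zero_eq_eval_zero, coeff_iterate_derivative, zero_add, Nat.descFactorial_self,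
    smul_eq_zero] at heval
  exact heval.resolve_left d.factorial_ne_zero

end Wronskian

section NonvanishingAtZero

/-- The Hermite operator `p ↦ 2xp' - p''`, whose eigenvectors are the Hermite polynomials. -/
noncomputable def hermiteOp : Module.End ℝ ℝ[X] :=
  LinearMap.mulLeft ℝ (2 * X) ∘ₗ derivative - derivative ∘ₗ derivative

lemma hermiteOp_apply (p : ℝ[X]) :
    hermiteOp p = 2 * X * derivative p - derivative (derivative p) := rfl

lemma hasEigenvector_hermiteOp (n : ℕ) :
    hermiteOp.HasEigenvector (2 * n : ℝ) (physHermite n) := by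
  refine ⟨Module.End.mem_eigenspace_iff.mpr ?_, physHermite_ne_zero n⟩
  have h := physHermite_ode n
  simp only [Function.iterate_succ_apply, Function.iterate_zero_apply] at h
  rw [hermiteOp_apply, h, smul_eq_C_mul]
  ring

lemma X_pow_dvd_hermiteOp {a : ℕ} {p : ℝ[X]} (h : X ^ (a + 2) ∣ p) : X ^ a ∣ hermiteOp p := by
  have h' : X ^ (a + 1) ∣ derivative p := pow_sub_one_dvd_derivative_of_pow_dvd (n := a + 2) h
  have h'' : X ^ a ∣ derivative (derivative p) :=
    pow_sub_one_dvd_derivative_of_pow_dvd (n := a + 1) h'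
  rw [hermiteOp_apply]
  exact dvd_sub (dvd_mul_of_dvd_right ((pow_dvd_pow X a.le_succ).trans h') _) h''

lemma X_pow_dvd_hermiteOp_pow {a i : ℕ} {p : ℝ[X]} (h : X ^ (a + 2 * i) ∣ p) :
    X ^ a ∣ (hermiteOp ^ i) p := by
  induction i generalizing a with
  | zero => exact h
  | succ i ih =>
    rw [pow_succ', Module.End.mul_apply]
    exact X_pow_dvd_hermiteOp (ih (by rwa [add_assoc, ← mul_one_add, add_comm 1]))

lemma X_sq_dvd_aeval_hermiteOp {s : ℕ} {Q p : ℝ[X]} (hQ : Q.natDegree < s)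
    (h : X ^ (2 * s) ∣ p) : X ^ 2 ∣ aeval hermiteOp Q p := by
  rw [aeval_eq_sum_range, LinearMap.sum_apply]
  refine Finset.dvd_sum fun i hi => ?_
  rw [LinearMap.smul_apply, smul_eq_C_mul]
  refine (X_pow_dvd_hermiteOp_pow ((pow_dvd_pow X ?_).trans h)).mul_left _
  have := Finset.mem_range.mp hi
  omega

/- Applying `Q(hermiteOp)` with `Q` of degree `< s` keeps the sum divisible by `X ^ 2`, and a `Q`
vanishing at the eigenvalues of all other terms of the parity of `n j` isolates `w j`. -/
lemma eq_zero_of_X_pow_dvd_sum_physHermite {ι : Type*} [Fintype ι] {n : ι → ℕ}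
    (hn : Function.Injective n) {s : ℕ} (hs : ∀ b, (Finset.univ.filter (n · % 2 = b)).card ≤ s)
    {w : ι → ℝ} (h : X ^ (2 * s) ∣ ∑ j, w j • physHermite (n j)) : w = 0 := by
  classical
  funext j
  let S := Finset.univ.filter fun i => n i % 2 = n j % 2
  have hj : j ∈ S := by simp [S]
  let Q : ℝ[X] := ∏ i ∈ S.erase j, (X - C (2 * n i : ℝ))
  have hdeg : Q.natDegree < s := by
    rw [natDegree_finsetProd_X_sub_C_eq_card]
    exact (Finset.card_erase_lt_of_mem hj).trans_le (hs _)
  have hQ : ∀ i, Q.eval (2 * n i : ℝ) = 0 ↔ i ∈ S.erase j := fun i => by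
    simp only [Q, eval_prod, eval_sub, eval_X, eval_C, Finset.prod_eq_zero_iff, sub_eq_zero,
      mul_right_inj' (two_ne_zero' ℝ), Nat.cast_inj, hn.eq_iff, exists_eq_right']
  have hcoeff := X_pow_dvd_iff.mp (X_sq_dvd_aeval_hermiteOp hdeg h) _ (Nat.mod_lt (n j) two_pos)
  simp only [map_sum, map_smul, finsetSum_coeff, coeff_smul, smul_eq_mul,
    Module.End.aeval_apply_of_hasEigenvector (hasEigenvector_hermiteOp _)] at hcoeff
  rw [Finset.sum_eq_single j _ (by simp)] at hcoeff
  · have hQj : Q.eval (2 * n j : ℝ) ≠ 0 := (hQ j).not.mpr (S.notMem_erase j)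
    have hHj := (coeff_mod_two_physHermite_ne_zero_iff (n j) (n j)).mpr rfl
    exact (mul_eq_zero.mp hcoeff).resolve_right (mul_ne_zero hQj hHj)
  · intro i _ hij
    by_cases hi : i ∈ S
    · rw [(hQ i).mpr (Finset.mem_erase.mpr ⟨hij, hi⟩), zero_mul, mul_zero]
    · have hH : (physHermite (n i)).coeff (n j % 2) = 0 := by
        have hmod : n i % 2 ≠ n j % 2 := by simpa [S] using hi
        exact not_not.mp ((coeff_mod_two_physHermite_ne_zero_iff (n i) (n j)).not.mpr hmod)
      rw [hH, mul_zero, mul_zero]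

variable {r : ℕ} {lam : Fin r → ℕ}

lemma IsPartition.strictMono_index (h : IsPartition r lam) :
    StrictMono fun j : Fin r => lam j.rev + j := fun _ _ hij =>
  add_lt_add_of_le_of_lt (h.1 _ _ (Fin.rev_le_rev.mpr hij.le)) hij

lemma IsEvenPartition.index_eq_succ (h : IsEvenPartition r lam) {i j : Fin r} (hij : i < j)
    (hdiv : (i : ℕ) / 2 = j / 2) : lam j.rev + j = lam i.rev + i + 1 := by
  obtain ⟨-, ⟨s, hs⟩, hpair⟩ := h
  have : (i : ℕ) < j := hij
  have hk : 2 * (s - 1 - (i : ℕ) / 2) + 1 < r := by omega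
  have hj : j.rev = ⟨2 * (s - 1 - (i : ℕ) / 2), by omega⟩ := by ext; simp only [Fin.val_rev]; omega
  have hi : i.rev = ⟨2 * (s - 1 - (i : ℕ) / 2) + 1, hk⟩ := by ext; simp only [Fin.val_rev]; omega
  rw [hi, hj, hpair _ hk]
  omega

lemma IsEvenPartition.card_index_mod_two_le {s : ℕ} {lam : Fin (2 * s) → ℕ}
    (h : IsEvenPartition (2 * s) lam) (b : ℕ) :
    (Finset.univ.filter fun j : Fin (2 * s) => (lam j.rev + j) % 2 = b).card ≤ s := by
  refine le_of_le_of_eq ?_ (Finset.card_range s)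
  refine Finset.card_le_card_of_injOn (fun j => (j : ℕ) / 2) (fun j _ => ?_) ?_
  · simp only [Finset.coe_range, Set.mem_Iio]
    omega
  · intro i hi j hj (hdiv : (i : ℕ) / 2 = j / 2)
    simp only [Finset.coe_filter, Finset.mem_univ, true_and, Set.mem_ofPred_eq] at hi hj
    rcases lt_trichotomy i j with hij | hij | hij
    · have := h.index_eq_succ hij hdiv
      omega
    · exact hij
    · have := h.index_eq_succ hij hdiv.symm
      omega

lemma IsEvenPartition.eval_zero_genHermite_ne_zero (h : IsEvenPartition r lam) :
    (genHermite r lam).eval 0 ≠ 0 := by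
  obtain ⟨s, rfl⟩ := h.2.1.exists_two_nsmul
  exact eval_zero_Wron_ne_zero _ fun w hw =>
    eq_zero_of_X_pow_dvd_sum_physHermite h.1.strictMono_index.injective h.card_index_mod_two_le hw

lemma IsEvenPartition.even_sum (h : IsEvenPartition r lam) : Even (∑ i, lam i) := by
  obtain ⟨-, ⟨s, hs⟩, hpair⟩ := h
  obtain rfl : r = s * 2 := by omega
  rw [← finProdFinEquiv.sum_comp, Fintype.sum_prod_type]
  refine Finset.even_sum _ fun k _ => ⟨lam (finProdFinEquiv (k, 0)), ?_⟩
  rw [Fin.sum_univ_two]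
  congr 1
  have := hpair k (by omega)
  convert this.symm using 2 <;> (ext; simp [finProdFinEquiv, add_comm])

end NonvanishingAtZero

section ExceptionalHermite

variable {r : ℕ} (lam : Fin r → ℕ)

lemma exists_XHermite_eq_sum :
    ∃ c : Fin (r + 1) → ℝ[X], c (Fin.last r) = genHermite r lam ∧
      ∀ n, XHermite r lam n = ∑ i, c i * derivative^[i] (physHermite (n + r - ∑ i, lam i)) := by
  obtain ⟨c, hc, hsum⟩ := exists_Wron_snoc_eq_sum fun j : Fin r => physHermite (lam j.rev + j)
  exact ⟨c, hc, fun n => hsum _⟩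

lemma eval_neg_XHermite_eq_zero_iff (n : ℕ) (t : ℝ) :
    (XHermite r lam n).eval (-t) = 0 ↔ (XHermite r lam n).eval t = 0 :=
  eval_neg_Wron_eq_zero_iff _ (Fin.snoc (fun j : Fin r => lam j.rev + (j : ℕ)) (n + r - ∑ i, lam i))
    (Fin.lastCases (by simpa using physHermite_comp_neg_X _)
      fun _ => by simpa using physHermite_comp_neg_X _) t

end ExceptionalHermite

section LocallyUniformLimits

open Filter Topology

variable {ι α β : Type*} [TopologicalSpace α] [UniformSpace β] {F : ι → α → β} {f : α → β}
  {l : Filter ι}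

lemma tendstoLocallyUniformly_iff_forall_tendsto_prod (hf : Continuous f) :
    TendstoLocallyUniformly F f l ↔
      ∀ s, Tendsto (fun q : ι × α => F q.1 q.2) (l ×ˢ 𝓝 s) (𝓝 (f s)) := by
  rw [tendstoLocallyUniformly_iff_forall_tendsto]
  refine forall_congr' fun s => ?_
  have hs : Tendsto (fun q : ι × α => (f s, f q.2)) (l ×ˢ 𝓝 s) (uniformity β) :=
    Uniform.tendsto_nhds_right.mp ((hf.tendsto s).comp tendsto_snd)
  rw [Uniform.tendsto_nhds_right]
  exact ⟨hs.uniformity_trans, hs.uniformity_symm.uniformity_trans⟩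

lemma tendstoLocallyUniformly_filter_mono {l' : Filter ι} (hF : TendstoLocallyUniformly F f l)
    (hl : l' ≤ l) : TendstoLocallyUniformly F f l' := fun u hu x =>
  (hF u hu x).imp fun _ h => ⟨h.1, h.2.filter_mono hl⟩

lemma eq_zero_of_tendsto_zeros [T2Space β] [Zero β] [NeBot l] {a : ι → α} {p : α}
    (hF : TendstoLocallyUniformly F f l) (hf : Continuous f) (ha : Tendsto a l (𝓝 p))
    (hFa : ∀ᶠ i in l, F i (a i) = 0) : f p = 0 :=
  tendsto_nhds_unique_of_eventuallyEq (hF.tendsto_comp hf.continuousAt ha) tendsto_const_nhds hFa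

end LocallyUniformLimits

section PerturbedOscillator

open Filter Topology Set
open scoped NNReal

lemma lipschitzWith_oscillator {a : ℝ} {R : ℝ≥0} (ha : |a| ≤ R) :
    LipschitzWith (1 + R) fun p : ℝ × ℝ => (p.2, a * p.2 - p.1) := by
  refine LipschitzWith.of_dist_le_mul fun p q => ?_
  obtain ⟨h₁, h₂⟩ := max_le_iff.mp (Prod.dist_eq (x := p) (y := q)).ge
  rw [Real.dist_eq] at h₁ h₂
  rw [Prod.dist_eq, NNReal.coe_add, NNReal.coe_one, one_add_mul]
  refine max_le (h₂.trans (le_add_of_nonneg_right (by positivity))) ?_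
  calc |a * p.2 - p.1 - (a * q.2 - q.1)| = |(q.1 - p.1) + a * (p.2 - q.2)| := by ring_nf
    _ ≤ |q.1 - p.1| + |a| * |p.2 - q.2| := by rw [← abs_mul]; exact abs_add_le _ _
    _ ≤ dist p q + R * dist p q := by
      rw [abs_sub_comm q.1]
      gcongr

variable {u v : ℝ → ℝ} {ε : ℝ} {R : ℝ≥0}

lemma dist_sin_cos_le_gronwallBound_of_nonneg (hε : ε ∈ Icc 0 1) (hu : ∀ s, HasDerivAt u (v s) s)
    (hv : ∀ s, HasDerivAt v (ε * s * v s - u s) s) (hu₀ : u 0 = 0) (hv₀ : v 0 = 1)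
    {s : ℝ} (hs : s ∈ Icc 0 (R : ℝ)) :
    dist (u s, v s) (Real.sin s, Real.cos s) ≤ gronwallBound 0 (1 + R) (ε * R) R := by
  have hεR : 0 ≤ ε * R := mul_nonneg hε.1 R.2
  have huv : ∀ t, HasDerivAt (fun t => (u t, v t)) (v t, ε * t * v t - u t) t := fun t =>
    (hu t).prodMk (hv t)
  have hsc : ∀ t, HasDerivAt (fun t => (Real.sin t, Real.cos t)) (Real.cos t, -Real.sin t) t :=
    fun t => (Real.hasDerivAt_sin t).prodMk (Real.hasDerivAt_cos t)
  have h := dist_le_of_approx_trajectories_ODE_of_mem (a := 0) (b := R) (s := fun _ => univ)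
    (v := fun t (p : ℝ × ℝ) => (p.2, ε * t * p.2 - p.1)) (K := 1 + R) (εf := 0) (εg := ε * R)
    (δ := 0) (fun t ht => (lipschitzWith_oscillator ?_).lipschitzOnWith)
    (fun t _ => (huv t).continuousAt.continuousWithinAt) (fun t _ => (huv t).hasDerivWithinAt)
    (fun t _ => (dist_self _).le) (fun _ _ => mem_univ _)
    (fun t _ => (hsc t).continuousAt.continuousWithinAt) (fun t _ => (hsc t).hasDerivWithinAt)
    (fun t ht => ?_) (fun _ _ => mem_univ _) (by simp [hu₀, hv₀]) s hs
  · refine h.trans ?_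
    rw [sub_zero, zero_add]
    exact gronwallBound_mono le_rfl hεR (1 + R).2 hs.2
  · rw [abs_of_nonneg (mul_nonneg hε.1 ht.1)]
    exact (mul_le_of_le_one_left ht.1 hε.2).trans ht.2.le
  · rw [Prod.dist_eq, dist_self, max_eq_right dist_nonneg, Real.dist_eq]
    calc |-Real.sin t - (ε * t * Real.cos t - Real.sin t)| = ε * t * |Real.cos t| := by
          rw [← abs_neg, ← abs_of_nonneg (mul_nonneg hε.1 ht.1), ← abs_mul,
            abs_of_nonneg (mul_nonneg hε.1 ht.1)]
          ring_nf
      _ ≤ ε * t := mul_le_of_le_one_right (mul_nonneg hε.1 ht.1) (Real.abs_cos_le_one t)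
      _ ≤ ε * R := by gcongr; exacts [hε.1, ht.2.le]

lemma dist_sin_cos_le_gronwallBound (hε : ε ∈ Icc 0 1) (hu : ∀ s, HasDerivAt u (v s) s)
    (hv : ∀ s, HasDerivAt v (ε * s * v s - u s) s) (hu₀ : u 0 = 0) (hv₀ : v 0 = 1)
    {s : ℝ} (hs : |s| ≤ R) :
    dist (u s, v s) (Real.sin s, Real.cos s) ≤ gronwallBound 0 (1 + R) (ε * R) R := by
  rcases le_total 0 s with hs₀ | hs₀
  · exact dist_sin_cos_le_gronwallBound_of_nonneg hε hu hv hu₀ hv₀ ⟨hs₀, (le_abs_self s).trans hs⟩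
  · have h := dist_sin_cos_le_gronwallBound_of_nonneg (u := fun t => -u (-t)) (v := fun t => v (-t))
      hε (fun t => ?_) (fun t => ?_) (by simp [hu₀]) (by simp [hv₀])
      ⟨neg_nonneg.mpr hs₀, (neg_le_abs s).trans hs⟩
    · simpa [Prod.dist_eq, dist_neg_neg] using h
    · simpa [Function.comp_def] using ((hu (-t)).comp t (hasDerivAt_neg t)).fun_neg
    · refine ((hv (-t)).comp t (hasDerivAt_neg t)).congr_deriv ?_
      ring

lemma tendsto_sin_cos_of_perturbed_oscillator {ι : Type*} {l : Filter ι} {u v : ι → ℝ → ℝ}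
    {ε : ι → ℝ} (hε : Tendsto ε l (𝓝 0)) (hε' : ∀ i, ε i ∈ Icc 0 1)
    (hu : ∀ i s, HasDerivAt (u i) (v i s) s)
    (hv : ∀ i s, HasDerivAt (v i) (ε i * s * v i s - u i s) s)
    (hu₀ : ∀ i, u i 0 = 0) (hv₀ : ∀ i, v i 0 = 1) (s : ℝ) :
    Tendsto (fun q : ι × ℝ => (u q.1 q.2, v q.1 q.2)) (l ×ˢ 𝓝 s) (𝓝 (Real.sin s, Real.cos s)) := by
  let R : ℝ≥0 := ‖s‖₊ + 1
  have hlim : Tendsto (fun q : ι × ℝ => (Real.sin q.2, Real.cos q.2)) (l ×ˢ 𝓝 s)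
      (𝓝 (Real.sin s, Real.cos s)) :=
    ((Real.continuous_sin.prodMk Real.continuous_cos).tendsto s).comp tendsto_snd
  have hbound : Tendsto (fun q : ι × ℝ => gronwallBound 0 (1 + R) (ε q.1 * R) R) (l ×ˢ 𝓝 s)
      (𝓝 0) := by
    have h := (gronwallBound_continuous_ε 0 (1 + R) R).tendsto 0
    rw [gronwallBound_ε0_δ0] at h
    exact h.comp ((zero_mul (R : ℝ)).symm ▸ (hε.comp tendsto_fst).mul_const _)
  refine hlim.congr_dist (squeeze_zero' (.of_forall fun _ => dist_nonneg) ?_ hbound)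
  have hR : ∀ᶠ t : ℝ in 𝓝 s, |t| ≤ R :=
    (continuous_abs.tendsto s).eventually_le_const (by simp [R])
  filter_upwards [hR.prod_inr l] with q hq
  rw [dist_comm]
  exact dist_sin_cos_le_gronwallBound (hε' q.1) (hu q.1) (hv q.1) (hu₀ q.1) (hv₀ q.1) hq

end PerturbedOscillator

section Scaling

open Filter Topology

/-- The magnification `√(4K+2)` carrying the zeros of degree `2K + 1` near the origin to
asymptotic spacing `π`. -/
noncomputable def zeroScale (K : ℕ) : ℝ := √(4 * K + 2)

lemma zeroScale_pos (K : ℕ) : 0 < zeroScale K := Real.sqrt_pos.mpr (by positivity)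

lemma zeroScale_sq (K : ℕ) : zeroScale K ^ 2 = 4 * K + 2 := Real.sq_sqrt (by positivity)

lemma tendsto_zeroScale_inv : Tendsto (fun K => (zeroScale K)⁻¹) atTop (𝓝 0) := by
  refine (Real.tendsto_sqrt_atTop.comp ?_).inv_tendsto_atTop
  exact tendsto_atTop_add_const_right _ _
    (tendsto_natCast_atTop_atTop.const_mul_atTop (by norm_num))

/-- The Hermite polynomial of degree `2K + 1 + r` in the magnified variable. -/
noncomputable def dilatedHermite (r K : ℕ) : ℝ[X] :=
  (physHermite (2 * K + 1 + r)).comp (C (zeroScale K)⁻¹ * X)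

/-- The dilated Hermite polynomial of degree `2K + 1 + r`, normalized so that its `r`-th derivative,
which is proportional to a dilated `H_{2K+1}`, has slope `1` at the origin. -/
noncomputable def scaledHermite (r K : ℕ) : ℝ[X] :=
  C ((derivative^[r + 1] (dilatedHermite r K)).eval 0)⁻¹ * dilatedHermite r K

variable {r : ℕ}

lemma eval_iterate_derivative_dilatedHermite (r K i : ℕ) (s : ℝ) :
    (derivative^[i] (dilatedHermite r K)).eval s = (zeroScale K)⁻¹ ^ i *
      (derivative^[i] (physHermite (2 * K + 1 + r))).eval ((zeroScale K)⁻¹ * s) := by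
  simp [dilatedHermite, iterate_derivative_comp_C_mul_X]

lemma eval_zero_iterate_derivative_dilatedHermite (r K : ℕ) :
    (derivative^[r] (dilatedHermite r K)).eval 0 = 0 := by
  have h := (coeff_zero_physHermite_ne_zero_iff (2 * K + 1)).not.mpr (by simp)
  rw [not_not, coeff_zero_eq_eval_zero] at h
  simp [eval_iterate_derivative_dilatedHermite, iterate_derivative_physHermite_add, h]

lemma eval_zero_iterate_derivative_dilatedHermite_ne_zero (r K : ℕ) :
    (derivative^[r + 1] (dilatedHermite r K)).eval 0 ≠ 0 := by
  have h := (coeff_zero_physHermite_ne_zero_iff (2 * K)).mpr (even_two_mul K)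
  rw [coeff_zero_eq_eval_zero] at h
  rw [eval_iterate_derivative_dilatedHermite, add_assoc, add_comm 1 r,
    iterate_derivative_physHermite_add]
  have hfac : ((2 * K + (r + 1)).descFactorial (r + 1) : ℝ) ≠ 0 :=
    Nat.cast_ne_zero.mpr (Nat.descFactorial_pos.mpr (by omega)).ne'
  simp only [eval_mul, eval_C, mul_zero]
  exact mul_ne_zero (pow_ne_zero _ (inv_ne_zero (zeroScale_pos K).ne'))
    (mul_ne_zero (mul_ne_zero (by positivity) hfac) h)

lemma eval_iterate_derivative_dilatedHermite_ode (K : ℕ) {i : ℕ} (hi : i ≤ r) (s : ℝ) :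
    (2 * K + 1) * (derivative^[i + 2] (dilatedHermite r K)).eval s
      = s * (derivative^[i + 1] (dilatedHermite r K)).eval s
        - (2 * K + 1 + (r - i)) * (derivative^[i] (dilatedHermite r K)).eval s := by
  have h := congrArg (eval ((zeroScale K)⁻¹ * s))
    (iterate_derivative_physHermite_ode (2 * K + 1 + (r - i)) i)
  rw [add_assoc (2 * K + 1), Nat.sub_add_cancel hi] at h
  push_cast [Nat.cast_sub hi] at h
  simp only [eval_sub, eval_mul, eval_C, eval_X, eval_ofNat] at h
  have hw : (2 * K + 1) * (zeroScale K)⁻¹ ^ 2 = 2⁻¹ := by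
    rw [inv_pow, zeroScale_sq]
    field_simp
    ring
  simp only [eval_iterate_derivative_dilatedHermite, h]
  linear_combination ((zeroScale K)⁻¹ ^ i * (2 * ((zeroScale K)⁻¹ * s) *
    (derivative^[i + 1] (physHermite (2 * K + 1 + r))).eval ((zeroScale K)⁻¹ * s) -
    2 * (2 * K + 1 + (r - i)) *
      (derivative^[i] (physHermite (2 * K + 1 + r))).eval ((zeroScale K)⁻¹ * s))) * hw

lemma eval_iterate_derivative_scaledHermite (r K i : ℕ) (s : ℝ) :
    (derivative^[i] (scaledHermite r K)).eval s =
      ((derivative^[r + 1] (dilatedHermite r K)).eval 0)⁻¹ *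
        (derivative^[i] (dilatedHermite r K)).eval s := by
  rw [scaledHermite, iterate_derivative_C_mul, eval_mul, eval_C]

lemma eval_iterate_derivative_scaledHermite_ode (K : ℕ) {i : ℕ} (hi : i ≤ r) (s : ℝ) :
    (2 * K + 1) * (derivative^[i + 2] (scaledHermite r K)).eval s
      = s * (derivative^[i + 1] (scaledHermite r K)).eval s
        - (2 * K + 1 + (r - i)) * (derivative^[i] (scaledHermite r K)).eval s := by
  simp only [eval_iterate_derivative_scaledHermite]
  linear_combination ((derivative^[r + 1] (dilatedHermite r K)).eval 0)⁻¹ *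
    eval_iterate_derivative_dilatedHermite_ode K hi s

lemma tendsto_inv_two_mul_add_one : Tendsto (fun K : ℕ => (2 * K + 1 : ℝ)⁻¹) atTop (𝓝 0) :=
  (tendsto_atTop_add_const_right _ _
    (tendsto_natCast_atTop_atTop.const_mul_atTop two_pos)).inv_tendsto_atTop

lemma tendsto_iterate_derivative_scaledHermite_sin_cos (r : ℕ) (s : ℝ) :
    Tendsto (fun q : ℕ × ℝ => ((derivative^[r] (scaledHermite r q.1)).eval q.2,
      (derivative^[r + 1] (scaledHermite r q.1)).eval q.2)) (atTop ×ˢ 𝓝 s)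
      (𝓝 (Real.sin s, Real.cos s)) := by
  refine tendsto_sin_cos_of_perturbed_oscillator tendsto_inv_two_mul_add_one
    (u := fun K s => (derivative^[r] (scaledHermite r K)).eval s)
    (v := fun K s => (derivative^[r + 1] (scaledHermite r K)).eval s)
    (fun K => ⟨by positivity, inv_le_one_of_one_le₀ (by simp)⟩) (fun K s => ?_) (fun K s => ?_)
    (fun K => ?_) (fun K => ?_) s
  · simpa only [Function.iterate_succ_apply'] using
      (derivative^[r] (scaledHermite r K)).hasDerivAt s
  · refine ((derivative^[r + 1] (scaledHermite r K)).hasDerivAt s).congr_deriv ?_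
    have h := eval_iterate_derivative_scaledHermite_ode K (le_refl r) s
    rw [Function.iterate_succ_apply' _ (r + 1)] at h
    field_simp
    linear_combination h
  · rw [eval_iterate_derivative_scaledHermite, eval_zero_iterate_derivative_dilatedHermite,
      mul_zero]
  · rw [eval_iterate_derivative_scaledHermite,
      inv_mul_cancel₀ (eval_zero_iterate_derivative_dilatedHermite_ne_zero r K)]

lemma tendsto_iterate_derivative_scaledHermite_of_succ {i : ℕ} (hi : i ≤ r) {s a b : ℝ}
    (h₁ : Tendsto (fun q : ℕ × ℝ => (derivative^[i + 1] (scaledHermite r q.1)).eval q.2)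
      (atTop ×ˢ 𝓝 s) (𝓝 a))
    (h₂ : Tendsto (fun q : ℕ × ℝ => (derivative^[i + 2] (scaledHermite r q.1)).eval q.2)
      (atTop ×ˢ 𝓝 s) (𝓝 b)) :
    Tendsto (fun q : ℕ × ℝ => (derivative^[i] (scaledHermite r q.1)).eval q.2)
      (atTop ×ˢ 𝓝 s) (𝓝 (-b)) := by
  have hε := tendsto_inv_two_mul_add_one.comp (tendsto_fst (f := atTop) (g := 𝓝 s))
  have hlim := ((hε.mul (tendsto_snd.mul h₁)).sub h₂).div ((hε.mul_const (r - i : ℝ)).const_add 1)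
    (by simp)
  simp only [zero_mul, zero_sub, add_zero, div_one] at hlim
  refine hlim.congr fun q => ?_
  have hri : (0 : ℝ) ≤ r - i := sub_nonneg.mpr (Nat.cast_le.mpr hi)
  have h := eval_iterate_derivative_scaledHermite_ode q.1 hi q.2
  simp only [Pi.div_apply, Function.comp_apply]
  field_simp
  linear_combination -h

lemma tendsto_iterate_derivative_scaledHermite {i : ℕ} (hi : i ≤ r + 1) (s : ℝ) :
    Tendsto (fun q : ℕ × ℝ => (derivative^[i] (scaledHermite r q.1)).eval q.2)
      (atTop ×ˢ 𝓝 s) (𝓝 (Real.sin (s + (i - r) * (Real.pi / 2)))) := by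
  let T (i : ℕ) := Tendsto (fun q : ℕ × ℝ => (derivative^[i] (scaledHermite r q.1)).eval q.2)
    (atTop ×ˢ 𝓝 s) (𝓝 (Real.sin (s + (i - r) * (Real.pi / 2))))
  have h := tendsto_iterate_derivative_scaledHermite_sin_cos r s
  have hsin : T r := by simpa [T] using h.fst_nhds
  have hcos : T (r + 1) := by simpa [T, Real.sin_add_pi_div_two] using h.snd_nhds
  suffices ∀ i ≤ r, T i ∧ T (i + 1) by
    rcases hi.lt_or_eq with hi | rfl
    exacts [(this i (Nat.lt_succ_iff.mp hi)).1, hcos]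
  intro i hi
  induction hi using Nat.decreasingInduction with
  | self => exact ⟨hsin, hcos⟩
  | of_succ i hi ih =>
    refine ⟨?_, ih.1⟩
    convert tendsto_iterate_derivative_scaledHermite_of_succ hi.le ih.1 ih.2 using 2
    rw [← Real.sin_sub_pi]
    push_cast
    ring_nf

lemma tendsto_sum_iterate_derivative_scaledHermite (c : Fin (r + 1) → ℝ[X]) {e : ℕ} (he : e ≤ 1)
    (s : ℝ) :
    Tendsto (fun q : ℕ × ℝ => ∑ i : Fin (r + 1), (zeroScale q.1)⁻¹ ^ (r - (i : ℕ)) *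
        (c i).eval ((zeroScale q.1)⁻¹ * q.2) *
        (derivative^[i + e] (scaledHermite r q.1)).eval q.2)
      (atTop ×ˢ 𝓝 s)
      (𝓝 ((c (Fin.last r)).eval 0 * Real.sin (s + e * (Real.pi / 2)))) := by
  have hw : Tendsto (fun q : ℕ × ℝ => (zeroScale q.1)⁻¹) (atTop ×ˢ 𝓝 s) (𝓝 0) :=
    tendsto_zeroScale_inv.comp tendsto_fst
  have hterm (i : Fin (r + 1)) := ((hw.pow (r - (i : ℕ))).mul
    (((c i).continuous.tendsto _).comp (hw.mul tendsto_snd))).mul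
    (tendsto_iterate_derivative_scaledHermite (r := r) (i := i + e) (by omega) s)
  have hlim : ∑ i : Fin (r + 1), 0 ^ (r - (i : ℕ)) * (c i).eval (0 * s) *
      Real.sin (s + (((i + e : ℕ) : ℝ) - r) * (Real.pi / 2)) =
        (c (Fin.last r)).eval 0 * Real.sin (s + e * (Real.pi / 2)) := by
    rw [Fin.sum_univ_castSucc, Finset.sum_eq_zero fun i _ => ?_]
    · simp
    · simp [Nat.sub_ne_zero_of_lt i.isLt]
  rw [← hlim]
  exact tendsto_finsetSum _ fun i _ => hterm i

/-- The combination `∑ cᵢ H⁽ⁱ⁾` of derivatives of `H = H_{2K+1+r}` in the magnified variable, up to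
a nonzero factor. With the cofactors of a Wronskian as `cᵢ` it is a rescaled exceptional Hermite
polynomial. -/
noncomputable def scaledHermiteSum (c : Fin (r + 1) → ℝ[X]) (K : ℕ) : ℝ[X] :=
  ∑ i : Fin (r + 1), C ((zeroScale K)⁻¹ ^ (r - (i : ℕ))) * (c i).comp (C (zeroScale K)⁻¹ * X) *
    derivative^[i] (scaledHermite r K)

lemma eval_scaledHermiteSum_eq_zero_iff (c : Fin (r + 1) → ℝ[X]) (K : ℕ) (s : ℝ) :
    (scaledHermiteSum c K).eval s = 0 ↔
      (∑ i : Fin (r + 1), c i * derivative^[i] (physHermite (2 * K + 1 + r))).eval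
        ((zeroScale K)⁻¹ * s) = 0 := by
  have h : (scaledHermiteSum c K).eval s = (zeroScale K)⁻¹ ^ r *
      ((derivative^[r + 1] (dilatedHermite r K)).eval 0)⁻¹ *
      (∑ i : Fin (r + 1), c i * derivative^[i] (physHermite (2 * K + 1 + r))).eval
        ((zeroScale K)⁻¹ * s) := by
    simp only [scaledHermiteSum, eval_finsetSum, eval_mul, eval_C, eval_comp, eval_X,
      eval_iterate_derivative_scaledHermite, eval_iterate_derivative_dilatedHermite r K (Fin.val _),
      Finset.mul_sum]
    refine Finset.sum_congr rfl fun i _ => ?_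
    rw [← pow_sub_mul_pow _ (Fin.is_le i)]
    ring
  rw [h, mul_eq_zero_iff_left]
  exact mul_ne_zero (pow_ne_zero _ (inv_ne_zero (zeroScale_pos K).ne'))
    (inv_ne_zero (eval_zero_iterate_derivative_dilatedHermite_ne_zero r K))

lemma tendsto_scaledHermiteSum (c : Fin (r + 1) → ℝ[X]) :
    TendstoLocallyUniformly (fun K s => (scaledHermiteSum c K).eval s)
      (fun s => (c (Fin.last r)).eval 0 * Real.sin s) atTop := by
  rw [tendstoLocallyUniformly_iff_forall_tendsto_prod (by fun_prop)]
  intro s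
  simpa [scaledHermiteSum, eval_finsetSum] using
    tendsto_sum_iterate_derivative_scaledHermite c zero_le_one s

lemma tendsto_derivative_scaledHermiteSum (c : Fin (r + 1) → ℝ[X]) :
    TendstoLocallyUniformly (fun K s => (derivative (scaledHermiteSum c K)).eval s)
      (fun s => (c (Fin.last r)).eval 0 * Real.cos s) atTop := by
  rw [tendstoLocallyUniformly_iff_forall_tendsto_prod (by fun_prop)]
  intro s
  have hw : Tendsto (fun q : ℕ × ℝ => (zeroScale q.1)⁻¹) (atTop ×ˢ 𝓝 s) (𝓝 0) :=
    tendsto_zeroScale_inv.comp tendsto_fst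
  have h := (hw.mul (tendsto_sum_iterate_derivative_scaledHermite (fun i => derivative (c i))
    zero_le_one s)).add (tendsto_sum_iterate_derivative_scaledHermite c le_rfl s)
  rw [zero_mul, zero_add, Nat.cast_one, one_mul, Real.sin_add_pi_div_two] at h
  refine h.congr fun q => ?_
  simp only [scaledHermiteSum, derivative_sum, derivative_mul, derivative_C, derivative_comp,
    derivative_X, eval_finsetSum, eval_add, eval_mul, eval_C, eval_comp, eval_X, eval_zero,
    eval_one, Function.iterate_succ_apply', Finset.mul_sum, ← Finset.sum_add_distrib, add_zero]
  exact Finset.sum_congr rfl fun i _ => by ring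

end Scaling

section ZeroTracking

open Filter Topology Set

variable {ι : Type*} {l : Filter ι} {F F' : ι → ℝ → ℝ} {f f' : ℝ → ℝ} {a b : ι → ℝ} {p q : ℝ}

lemma eventually_exists_zero_mem_Icc (hcont : ∀ i, Continuous (F i))
    (hF : ∀ t, Tendsto (F · t) l (𝓝 (f t))) {d : ℝ} (hf : HasDerivAt f d q) (hd : d ≠ 0)
    (hq : f q = 0) {ε : ℝ} (hε : 0 < ε) :
    ∀ᶠ i in l, ∃ t ∈ Icc (q - ε) (q + ε), F i t = 0 := by
  have hsign : ∀ᶠ t in 𝓝 q, SignType.sign (d * f t) = SignType.sign (t - q) :=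
    eventually_nhdsWithin_sign_eq_of_deriv_pos (f := fun t => d * f t)
      (by rw [(hf.const_mul d).deriv]; exact mul_self_pos.mpr hd) (by rw [hq, mul_zero])
  obtain ⟨δ, hδ, hball⟩ := Metric.nhds_basis_closedBall.eventually_iff.mp hsign
  let η := min δ ε
  have hη : 0 < η := lt_min hδ hε
  have hmem : ∀ t, |t - q| = η → t ∈ Metric.closedBall q δ := fun t ht =>
    Metric.mem_closedBall.mpr (ht.trans_le (min_le_left δ ε))
  have hleft : d * f (q - η) < 0 := by
    rw [← sign_eq_neg_one_iff, hball (hmem _ (by simp [abs_of_pos hη])), sub_sub_cancel_left,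
      sign_neg (neg_neg_of_pos hη)]
  have hright : 0 < d * f (q + η) := by
    rw [← sign_eq_one_iff, hball (hmem _ (by simp [abs_of_pos hη])), add_sub_cancel_left,
      sign_pos hη]
  filter_upwards [((hF (q - η)).const_mul d).eventually_lt_const hleft,
    ((hF (q + η)).const_mul d).eventually_const_lt hright] with i hil hir
  obtain ⟨t, ht, hFt⟩ := intermediate_value_Icc (by linarith)
    ((hcont i).const_mul d).continuousOn ⟨hil.le, hir.le⟩
  have hηε : η ≤ ε := min_le_right δ ε
  exact ⟨t, Icc_subset_Icc (by linarith) (by linarith) ht, (mul_eq_zero.mp hFt).resolve_left hd⟩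

lemma deriv_eq_zero_of_tendsto_zeros [NeBot l] (hderiv : ∀ i s, HasDerivAt (F i) (F' i s) s)
    (hF' : TendstoLocallyUniformly F' f' l) (hf' : Continuous f')
    (ha : Tendsto a l (𝓝 p)) (hb : Tendsto b l (𝓝 p)) (hab : ∀ᶠ i in l, a i < b i)
    (hFa : ∀ᶠ i in l, F i (a i) = 0) (hFb : ∀ᶠ i in l, F i (b i) = 0) : f' p = 0 := by
  have hrolle : ∀ᶠ i in l, ∃ t ∈ Ioo (a i) (b i), F' i t = 0 := by
    filter_upwards [hab, hFa, hFb] with i habi hai hbi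
    exact exists_hasDerivAt_eq_zero habi (fun t _ => (hderiv i t).continuousAt.continuousWithinAt)
      (hai.trans hbi.symm) fun t _ => hderiv i t
  obtain ⟨ξ, hξ⟩ := hrolle.choice
  have hξp : Tendsto ξ l (𝓝 p) := tendsto_of_tendsto_of_tendsto_of_le_of_le' ha hb
    (hξ.mono fun _ h => h.1.1.le) (hξ.mono fun _ h => h.1.2.le)
  exact eq_zero_of_tendsto_zeros hF' hf' hξp (hξ.mono fun _ h => h.2)

lemma tendsto_next_zero (hderiv : ∀ i s, HasDerivAt (F i) (F' i s) s)
    (hF : TendstoLocallyUniformly F f l) (hF' : TendstoLocallyUniformly F' f' l)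
    (hf : ∀ s, HasDerivAt f (f' s) s) (hf' : Continuous f')
    (hpq : p < q) (hfq : f q = 0) (hne : ∀ t ∈ Ioo p q, f t ≠ 0) (hp : f' p ≠ 0) (hq : f' q ≠ 0)
    (ha : Tendsto a l (𝓝 p)) (hab : ∀ᶠ i in l, a i < b i)
    (hFa : ∀ᶠ i in l, F i (a i) = 0) (hFb : ∀ᶠ i in l, F i (b i) = 0)
    (hnext : ∀ᶠ i in l, ∀ t, F i t = 0 → a i < t → b i ≤ t) : Tendsto b l (𝓝 q) := by
  have hfc : Continuous f := continuous_iff_continuousAt.mpr fun s => (hf s).continuousAt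
  have hupper : ∀ ε > 0, ∀ᶠ i in l, b i ≤ q + ε := fun ε hε => by
    have hε' : 0 < min ε ((q - p) / 2) := lt_min hε (by linarith)
    filter_upwards [hnext, ha.eventually_lt_const (by linarith : p < (p + q) / 2),
      eventually_exists_zero_mem_Icc
        (fun i => continuous_iff_continuousAt.mpr fun s => (hderiv i s).continuousAt)
        (fun t => hF.tendsto_comp hfc.continuousAt tendsto_const_nhds) (hf q) hq hfq hε']
      with i hi hai ⟨t, ht, hFt⟩
    have := min_le_left ε ((q - p) / 2)
    have := min_le_right ε ((q - p) / 2)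
    exact (hi t hFt (by linarith [ht.1])).trans (by linarith [ht.2])
  have hlower : ∀ᶠ i in l, p - 1 ≤ b i := by
    filter_upwards [ha.eventually_const_lt (sub_one_lt p), hab] with i hi habi
    exact (hi.trans habi).le
  refine isCompact_Icc.tendsto_nhds_of_unique_mapClusterPt (s := Icc (p - 1) (q + 1))
    (hlower.and (hupper 1 one_pos)) fun x _ hx => ?_
  obtain ⟨U, hU, hbx⟩ := mapClusterPt_iff_ultrafilter.mp hx
  have hpx : p ≤ x := le_of_tendsto_of_tendsto (ha.mono_left hU) hbx
    ((hab.filter_mono hU).mono fun _ h => h.le)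
  have hxq : x ≤ q := le_of_forall_pos_le_add fun ε hε =>
    le_of_tendsto hbx ((hupper ε hε).filter_mono hU)
  have hfx : f x = 0 := eq_zero_of_tendsto_zeros (tendstoLocallyUniformly_filter_mono hF hU) hfc
    hbx (hFb.filter_mono hU)
  rcases hpx.eq_or_lt with rfl | hpx
  · exact absurd (deriv_eq_zero_of_tendsto_zeros hderiv (tendstoLocallyUniformly_filter_mono hF' hU)
      hf' (ha.mono_left hU) hbx (hab.filter_mono hU) (hFa.filter_mono hU) (hFb.filter_mono hU)) hp
  · exact hxq.eq_of_not_lt fun hxq => hne x ⟨hpx, hxq⟩ hfx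

end ZeroTracking

section CentralZeros

open Filter Topology Set

/-- `y 1 < y 2 < ⋯ < y M` lists the elements of `S`, as in the paper's numbering of the real zeros
of a polynomial; the values of `y` outside `{1, …, M}` are irrelevant. -/
structure IsIncreasingEnum (y : ℕ → ℝ) (M : ℕ) (S : Set ℝ) : Prop where
  strictMonoOn : StrictMonoOn y (Icc 1 M)
  image_eq : y '' Icc 1 M = S

lemma isIncreasingEnum_iff {y : ℕ → ℝ} {M : ℕ} {S : Set ℝ} :
    IsIncreasingEnum y M S ↔
      StrictMonoOn y (Icc 1 M) ∧ ∀ t, t ∈ S ↔ ∃ j, 1 ≤ j ∧ j ≤ M ∧ y j = t := by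
  refine ⟨fun h => ⟨h.strictMonoOn, fun t => ?_⟩, fun h => ⟨h.1, Set.ext fun t => ?_⟩⟩
  · simp [← h.image_eq, and_assoc]
  · simp [h.2, and_assoc]

namespace IsIncreasingEnum

variable {y z : ℕ → ℝ} {M : ℕ} {S : Set ℝ}

lemma mem (h : IsIncreasingEnum y M S) {j : ℕ} (hj : j ∈ Icc 1 M) : y j ∈ S :=
  h.image_eq ▸ mem_image_of_mem y hj

lemma succ_le (h : IsIncreasingEnum y M S) {j : ℕ} (hj : j ∈ Icc 1 M) {t : ℝ} (ht : t ∈ S)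
    (hjt : y j < t) : y (j + 1) ≤ t := by
  rw [← h.image_eq] at ht
  obtain ⟨m, hm, rfl⟩ := ht
  have hjm : j < m := (h.strictMonoOn.lt_iff_lt hj hm).mp hjt
  exact h.strictMonoOn.monotoneOn ⟨by omega, hjm.trans_le hm.2⟩ hm hjm

lemma eqOn (hy : IsIncreasingEnum y M S) (hz : IsIncreasingEnum z M S) : EqOn y z (Icc 1 M) := by
  rw [← Set.domRestrict_eq_domRestrict_iff,
    ← StrictMono.range_inj hy.strictMonoOn.domRestrict hz.strictMonoOn.domRestrict,
    range_domRestrict, range_domRestrict, hy.image_eq, hz.image_eq]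

lemma reflect (h : IsIncreasingEnum y M S) :
    IsIncreasingEnum (fun j => -y (M + 1 - j)) M (-S) where
  strictMonoOn i hi j hj hij := neg_lt_neg <|
    h.strictMonoOn ⟨by grind, by grind⟩ ⟨by grind, by grind⟩ (by grind)
  image_eq := by
    rw [← h.image_eq, ← image_neg_eq_neg, ← image_image Neg.neg, ← image_image y]
    congr 2
    ext j
    simp only [mem_image, mem_Icc]
    exact ⟨by grind, fun hj => ⟨M + 1 - j, by omega, by omega⟩⟩

lemma reflect_eq_neg (h : IsIncreasingEnum y M S) (hS : -S = S) {j : ℕ} (hj : j ∈ Icc 1 M) :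
    y (M + 1 - j) = -y j :=
  (neg_eq_iff_eq_neg.mpr (h.eqOn (hS ▸ h.reflect) hj)).symm

lemma const_mul (h : IsIncreasingEnum y M S) {a : ℝ} (ha : 0 < a) :
    IsIncreasingEnum (fun j => a * y j) M {s | a⁻¹ * s ∈ S} where
  strictMonoOn i hi j hj hij := mul_lt_mul_of_pos_left (h.strictMonoOn hi hj hij) ha
  image_eq := by
    rw [← image_image (a * ·), h.image_eq]
    exact congrFun (image_eq_preimage_of_inverse (inv_mul_cancel_left₀ ha.ne')
      (mul_inv_cancel_left₀ ha.ne')) S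

end IsIncreasingEnum

variable {F F' : ℕ → ℝ → ℝ} {c : ℝ} {y : ℕ → ℕ → ℝ}

lemma tendsto_central_zeros_nat (hc : c ≠ 0) (hderiv : ∀ K s, HasDerivAt (F K) (F' K s) s)
    (hF : TendstoLocallyUniformly F (fun s => c * Real.sin s) atTop)
    (hF' : TendstoLocallyUniformly F' (fun s => c * Real.cos s) atTop)
    (hy : ∀ᶠ K in atTop, IsIncreasingEnum (y K) (2 * K + 1) {s | F K s = 0})
    (hy₀ : ∀ᶠ K in atTop, y K (K + 1) = 0) (k : ℕ) :
    Tendsto (fun K => y K (K + 1 + k)) atTop (𝓝 (k * Real.pi)) := by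
  induction k with
  | zero =>
    rw [Nat.cast_zero, zero_mul]
    exact tendsto_const_nhds.congr' (hy₀.mono fun _ h => h.symm)
  | succ k ih =>
    have hcos (m : ℕ) : c * Real.cos (m * Real.pi) ≠ 0 := by
      rw [Real.cos_nat_mul_pi]
      exact mul_ne_zero hc (pow_ne_zero _ (by norm_num))
    have hidx : ∀ᶠ K in atTop, k < K := eventually_gt_atTop k
    refine tendsto_next_zero hderiv hF hF' (fun s => (Real.hasDerivAt_sin s).const_mul c)
      (by fun_prop) (p := k * Real.pi) (by gcongr; simp)
      (mul_eq_zero_of_right c (Real.sin_nat_mul_pi (k + 1)))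
      (fun t ht => mul_ne_zero hc fun h => ?_) (hcos k) (hcos (k + 1)) ih ?_ ?_ ?_ ?_
    · obtain ⟨m, rfl⟩ := Real.sin_eq_zero_iff.mp h
      have h₁ := lt_of_mul_lt_mul_right ht.1 Real.pi_pos.le
      have h₂ := lt_of_mul_lt_mul_right ht.2 Real.pi_pos.le
      norm_cast at h₁ h₂
      omega
    · filter_upwards [hy, hidx] with K hK hk
      exact hK.strictMonoOn ⟨by omega, by omega⟩ ⟨by omega, by omega⟩ (by omega)
    · filter_upwards [hy, hidx] with K hK hk using hK.mem ⟨by omega, by omega⟩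
    · filter_upwards [hy, hidx] with K hK hk using hK.mem ⟨by omega, by omega⟩
    · filter_upwards [hy, hidx] with K hK hk t ht using hK.succ_le ⟨by omega, by omega⟩ ht

lemma tendsto_central_zeros (hc : c ≠ 0) (hderiv : ∀ K s, HasDerivAt (F K) (F' K s) s)
    (hF : TendstoLocallyUniformly F (fun s => c * Real.sin s) atTop)
    (hF' : TendstoLocallyUniformly F' (fun s => c * Real.cos s) atTop)
    (hsymm : ∀ K s, F K (-s) = 0 ↔ F K s = 0)
    (hy : ∀ᶠ K in atTop, IsIncreasingEnum (y K) (2 * K + 1) {s | F K s = 0}) (k : ℤ) :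
    Tendsto (fun K => y K (k + K + 1).toNat) atTop (𝓝 (k * Real.pi)) := by
  have hreflect : ∀ᶠ K in atTop, ∀ j ∈ Icc 1 (2 * K + 1), y K (2 * K + 1 + 1 - j) = -y K j :=
    hy.mono fun K hK j hj => hK.reflect_eq_neg (Set.ext (hsymm K)) hj
  have hy₀ : ∀ᶠ K in atTop, y K (K + 1) = 0 := hreflect.mono fun K hK => by
    have h := hK (K + 1) ⟨by omega, by omega⟩
    rw [show 2 * K + 1 + 1 - (K + 1) = K + 1 by omega] at h
    exact self_eq_neg.mp h
  have hnat := tendsto_central_zeros_nat hc hderiv hF hF' hy hy₀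
  obtain ⟨m, rfl | rfl⟩ := k.eq_nat_or_neg
  · refine (hnat m).congr fun K => ?_
    rw [show (m + K + 1 : ℤ).toNat = K + 1 + m by omega]
  · have h := (hnat m).neg
    rw [← neg_mul] at h
    push_cast
    refine h.congr' ?_
    filter_upwards [hreflect, eventually_ge_atTop m] with K hK hm
    rw [← hK _ ⟨by omega, by omega⟩,
      show 2 * K + 1 + 1 - (K + 1 + m) = (-m + K + 1 : ℤ).toNat by omega]

end CentralZeros

section ScaledZeros

open Filter Topology Set

lemma tendsto_two_mul_sqrt_div_zeroScale (L : ℕ) :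
    Tendsto (fun K : ℕ => 2 * √(K + L : ℕ) / zeroScale K) atTop (𝓝 1) := by
  have h := (tendsto_add_mul_div_add_mul_atTop_nhds (4 * L : ℝ) 2 4 four_ne_zero).sqrt
  rw [div_self four_ne_zero, Real.sqrt_one] at h
  refine h.congr fun K => ?_
  rw [zeroScale, Real.sqrt_div (by positivity), add_comm (2 : ℝ), ← mul_add, add_comm (L : ℝ),
    Real.sqrt_mul zero_le_four, Nat.cast_add, show (4 : ℝ) = 2 ^ 2 by norm_num,
    Real.sqrt_sq zero_le_two]

lemma tendsto_zeroScale_mul_zeros {r : ℕ} {c : Fin (r + 1) → ℝ[X]}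
    (hc : (c (Fin.last r)).eval 0 ≠ 0) {P : ℕ → ℝ[X]}
    (hP : ∀ K, P K = ∑ i, c i * derivative^[i] (physHermite (2 * K + 1 + r)))
    (hsymm : ∀ K t, (P K).eval (-t) = 0 ↔ (P K).eval t = 0) {y : ℕ → ℕ → ℝ}
    (hy : ∀ᶠ K in atTop, IsIncreasingEnum (y K) (2 * K + 1) {t | (P K).eval t = 0}) (k : ℤ) :
    Tendsto (fun K => zeroScale K * y K (k + K + 1).toNat) atTop (𝓝 (k * Real.pi)) := by
  have hzero (K : ℕ) (s : ℝ) :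
      (scaledHermiteSum c K).eval s = 0 ↔ (P K).eval ((zeroScale K)⁻¹ * s) = 0 := by
    rw [hP, eval_scaledHermiteSum_eq_zero_iff]
  refine tendsto_central_zeros (y := fun K j => zeroScale K * y K j) hc
    (fun K => (scaledHermiteSum c K).hasDerivAt) (tendsto_scaledHermiteSum c)
    (tendsto_derivative_scaledHermiteSum c) (fun K s => ?_) (hy.mono fun K hK => ?_) k
  · rw [hzero, hzero, mul_neg, hsymm]
  · simpa only [hzero, mem_ofPred_eq] using hK.const_mul (zeroScale_pos K)

end ScaledZeros

/-- Theorem 1.1(odd), eq. (11): for an even partition `λ` and fixed `k ∈ ℤ`,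
`lim_{n→∞} 2√n · x_{k+n+1-|λ|/2, 2n+1} = kπ`, where `x_{1,m} < ⋯ < x_{m-|λ|,m}`
enumerate the real zeros of `P_m` (for `m ≥ |λ| + λ_1`). -/
theorem zero_spacing_odd
    (r : ℕ) (lam : Fin r → ℕ) (hpart : IsEvenPartition r lam)
    (x : ℕ → ℕ → ℝ)
    (hx : ∀ m : ℕ, (∀ i : Fin r, (∑ i, lam i) + lam i ≤ m) →
      StrictMonoOn (x m) (Set.Icc 1 (m - ∑ i, lam i)) ∧
      ∀ t : ℝ, (XHermite r lam m).eval t = 0 ↔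
        ∃ j : ℕ, 1 ≤ j ∧ j ≤ m - (∑ i, lam i) ∧ x m j = t)
    (k : ℤ) :
    Filter.Tendsto
      (fun n : ℕ => 2 * Real.sqrt n *
        x (2 * n + 1) (k + (n : ℤ) + 1 - ((∑ i, lam i : ℕ) : ℤ) / 2).toNat)
      Filter.atTop (nhds ((k : ℝ) * Real.pi)) := by
  obtain ⟨L, hL⟩ := hpart.even_sum
  obtain ⟨c, hc, hP⟩ := exists_XHermite_eq_sum lam
  have hP' (K : ℕ) : XHermite r lam (2 * (K + L) + 1) =
      ∑ i, c i * derivative^[i] (physHermite (2 * K + 1 + r)) := by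
    rw [hP, hL, show 2 * (K + L) + 1 + r - (L + L) = 2 * K + 1 + r by omega]
  have hy : ∀ᶠ K in Filter.atTop, IsIncreasingEnum (x (2 * (K + L) + 1)) (2 * K + 1)
      {t | (XHermite r lam (2 * (K + L) + 1)).eval t = 0} := by
    filter_upwards [Filter.eventually_ge_atTop (∑ i, lam i)] with K hK
    have hlam (i : Fin r) : lam i ≤ ∑ i, lam i :=
      Finset.single_le_sum (fun _ _ => zero_le) (Finset.mem_univ i)
    have h := hx (2 * (K + L) + 1) fun i => by have := hlam i; omega
    rw [hL, show 2 * (K + L) + 1 - (L + L) = 2 * K + 1 by omega] at h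
    exact isIncreasingEnum_iff.mpr h
  have hlim := tendsto_zeroScale_mul_zeros (hc ▸ hpart.eval_zero_genHermite_ne_zero) hP'
    (fun K => eval_neg_XHermite_eq_zero_iff lam _) hy k
  rw [← Filter.tendsto_add_atTop_iff_nat L, ← one_mul ((k : ℝ) * Real.pi)]
  refine ((tendsto_two_mul_sqrt_div_zeroScale L).mul hlim).congr fun K => ?_
  rw [← mul_assoc, div_mul_cancel₀ _ (zeroScale_pos K).ne', hL,
    show k + (K + L : ℕ) + 1 - ((L + L : ℕ) : ℤ) / 2 = k + K + 1 by omega]
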